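/- Let q ≥ 0 with q not of the form k + 1/2 for a nonnegative integer k, let η ∈ ℝ be fixed, and let 0 < c < 1. Define F_q^{(2)}(η,β) = (1/(2π)) ∫_{-∞}^∞ e^{η(c+it)} (π(c+it)/sin(π(c+it))) M(−1/2; −q−1/2; 2(c+it)/β) /(c+it)^{q+5/2} dt (principal branch), coefficients d_k = 2^k (−1/2)_k/(k! (−q−1/2)_k), and Φ_k^{(2)}(η,q) = (1/2) ∫_{-∞}^∞ e^{η(c+it)} (c+it)^{k−q−3/2} / sin(π(c+it)) dt (principal branch). Then for every integer N ≥ 1, as β → +∞, F_q^{(2)}(η,β) − Σ_{k=0}^{N−1} d_k β^{−k} Φ_k^{(2)}(η,q) = O(β^{−N}). -/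

import Mathlib

open Real MeasureTheory Set Finset Filter Asymptotics

/-- Kummer's confluent hypergeometric function `M(a;b;z)` as a power series. -/
noncomputable def kummerM (a b z : ℂ) : ℂ :=
  ∑' k : ℕ, (ascPochhammer ℂ k).eval a /
      ((ascPochhammer ℂ k).eval b * (k.factorial : ℂ)) * z ^ k

/-- The function `F_q^{(2)}(η,β)` (principal branch of the complex power). -/
noncomputable def F2 (q c η β : ℝ) : ℂ :=
  (1 / (2 * (π : ℂ))) * ∫ t : ℝ,
    Complex.exp ((η : ℂ) * ((c : ℂ) + t * Complex.I)) *
      ((π : ℂ) * ((c : ℂ) + t * Complex.I) /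
        Complex.sin ((π : ℂ) * ((c : ℂ) + t * Complex.I))) *
      kummerM (-1 / 2) (-(q : ℂ) - 1 / 2)
        (2 * ((c : ℂ) + t * Complex.I) / (β : ℂ)) /
          ((c : ℂ) + t * Complex.I) ^ ((q : ℂ) + 5 / 2)

/-- The coefficients `d_k = 2^k (−1/2)_k/(k! (−q−1/2)_k)`. -/
noncomputable def dcoef (q : ℝ) (k : ℕ) : ℝ :=
  2 ^ k * (ascPochhammer ℝ k).eval (-1 / 2 : ℝ) /
    (k.factorial * (ascPochhammer ℝ k).eval (-q - 1 / 2))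

/-- The auxiliary function `Φ_k^{(2)}(η,q)` (principal branch of the complex power). -/
noncomputable def Phi2 (c : ℝ) (k : ℕ) (η q : ℝ) : ℂ :=
  (1 / 2 : ℂ) * ∫ t : ℝ, Complex.exp ((η : ℂ) * ((c : ℂ) + t * Complex.I)) *
      ((c : ℂ) + t * Complex.I) ^ ((k : ℂ) - (q : ℂ) - 3 / 2) /
        Complex.sin ((π : ℂ) * ((c : ℂ) + t * Complex.I))

open Topology

/-!
On the line `Re s = c` the factor `1 / sin (π s)` decays like `exp (-π |Im s|)`, while the Kummer
coefficients are `O(A ^ k / k!)`, so that `M(a; b; z s)` grows at most like `exp (A |z| |s|)`. For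
small `z` the exponential decay wins and the Kummer series may be integrated term by term. Hence
`F_q^{(2)}(η, β)` is an analytic function of `z = 1 / β` near `z = 0` with Taylor coefficients
`d_k Φ_k^{(2)}(η, q)`, and the expansion, which even converges for large `β`, has the Taylor
remainder as its error.
-/

section TermwiseIntegration

variable {α 𝕜 : Type*} [MeasurableSpace α] {μ : Measure α} [RCLike 𝕜] {g s : α → 𝕜} {u : ℕ → 𝕜}
  {A δ : ℝ}

theorem hasSum_integral_mul_tsum_mul_pow (hg : AEStronglyMeasurable g μ)
    (hs : AEStronglyMeasurable s μ) (hu : ∀ k, ‖u k‖ ≤ A ^ k / k.factorial)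
    (hint : Integrable (fun t ↦ ‖g t‖ * exp (δ * ‖s t‖)) μ) {z : 𝕜} (hz : A * ‖z‖ ≤ δ) :
    HasSum (fun k ↦ z ^ k * (u k * ∫ t, g t * s t ^ k ∂μ))
      (∫ t, g t * ∑' k, u k * (z * s t) ^ k ∂μ) := by
  have hA : 0 ≤ A := by simpa using (norm_nonneg _).trans (hu 1)
  have hterm (t : α) (k : ℕ) : ‖u k * (z * s t) ^ k‖ ≤ (δ * ‖s t‖) ^ k / k.factorial :=
    calc ‖u k * (z * s t) ^ k‖ ≤ A ^ k / k.factorial * (‖z‖ * ‖s t‖) ^ k := by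
          rw [norm_mul, norm_pow, norm_mul]
          gcongr
          exact hu k
      _ = (A * ‖z‖ * ‖s t‖) ^ k / k.factorial := by ring
      _ ≤ (δ * ‖s t‖) ^ k / k.factorial := by gcongr
  have hexp (t : α) :
      HasSum (fun k : ℕ ↦ ‖g t‖ * ((δ * ‖s t‖) ^ k / k.factorial)) (‖g t‖ * exp (δ * ‖s t‖)) := by
    rw [Real.exp_eq_exp_ℝ]
    exact (NormedSpace.expSeries_div_hasSum_exp (δ * ‖s t‖)).mul_left ‖g t‖
  have hsum (t : α) : Summable fun k ↦ u k * (z * s t) ^ k :=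
    .of_norm_bounded (Real.summable_pow_div_factorial _) (hterm t)
  have key := hasSum_integral_of_dominated_convergence (μ := μ)
    (F := fun k t ↦ g t * (u k * (z * s t) ^ k))
    (bound := fun k t ↦ ‖g t‖ * ((δ * ‖s t‖) ^ k / k.factorial))
    (fun k ↦ by fun_prop)
    (fun k ↦ .of_forall fun t ↦ by rw [norm_mul]; gcongr; exact hterm t k)
    (.of_forall fun t ↦ (hexp t).summable)
    (by simpa only [(hexp _).tsum_eq] using hint)
    (.of_forall fun t ↦ (hsum t).hasSum.mul_left (g t))
  refine key.congr_fun fun k ↦ ?_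
  rw [← mul_assoc, ← integral_const_mul]
  congr 1 with t
  ring

theorem hasFPowerSeriesAt_integral_mul_tsum_mul_pow (hg : AEStronglyMeasurable g μ)
    (hs : AEStronglyMeasurable s μ) (hu : ∀ k, ‖u k‖ ≤ A ^ k / k.factorial) (hδ : 0 < δ)
    (hint : Integrable (fun t ↦ ‖g t‖ * exp (δ * ‖s t‖)) μ) :
    HasFPowerSeriesAt (fun z ↦ ∫ t, g t * ∑' k, u k * (z * s t) ^ k ∂μ)
      (.ofScalars 𝕜 fun k ↦ u k * ∫ t, g t * s t ^ k ∂μ) 0 := by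
  have hsmall : ∀ᶠ z : 𝕜 in 𝓝 0, A * ‖z‖ ≤ δ := by
    have hcont : Tendsto (fun z : 𝕜 ↦ A * ‖z‖) (𝓝 0) (𝓝 0) :=
      Continuous.tendsto' (by fun_prop) _ _ (by simp)
    exact hcont.eventually_le_const hδ
  rw [hasFPowerSeriesAt_iff]
  filter_upwards [hsmall] with z hz
  simpa only [zero_add, smul_eq_mul, FormalMultilinearSeries.coeff_ofScalars] using
    hasSum_integral_mul_tsum_mul_pow hg hs hu hint hz

end TermwiseIntegration

section Kummer

/-- The `k`-th Taylor coefficient `(a)_k / ((b)_k k!)` of Kummer's function `M(a; b; ·)`. It is a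
junk value when `b` is one of `0, -1, …, -(k - 1)`. -/
noncomputable def kummerCoeff (a b : ℂ) (k : ℕ) : ℂ :=
  (ascPochhammer ℂ k).eval a / ((ascPochhammer ℂ k).eval b * (k.factorial : ℂ))

lemma exists_norm_kummerCoeff_le (a b : ℂ) :
    ∃ A : ℝ, ∀ k, ‖kummerCoeff a b k‖ ≤ A ^ k / k.factorial := by
  have hratio : Tendsto (fun j : ℕ ↦ (a + j) / (b + j)) atTop (𝓝 1) := by
    simpa using tendsto_add_mul_div_add_mul_atTop_nhds a b 1 (d := 1) one_ne_zero
  obtain ⟨A, hA⟩ := hratio.norm.bddAbove_range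
  have hA (j : ℕ) : ‖(a + j) / (b + j)‖ ≤ A := hA ⟨j, rfl⟩
  have hpoch (k : ℕ) : ‖(ascPochhammer ℂ k).eval a / (ascPochhammer ℂ k).eval b‖ ≤ A ^ k := by
    induction k with
    | zero => simp
    | succ k ih =>
      rw [ascPochhammer_succ_eval, ascPochhammer_succ_eval, mul_div_mul_comm, norm_mul, pow_succ]
      exact mul_le_mul ih (hA k) (norm_nonneg _) ((norm_nonneg _).trans ih)
  refine ⟨A, fun k ↦ ?_⟩
  rw [kummerCoeff, ← div_div, norm_div, Complex.norm_natCast]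
  gcongr
  exact hpoch k

theorem hasFPowerSeriesAt_integral_mul_kummerM {α : Type*} [MeasurableSpace α] {μ : Measure α}
    {g s : α → ℂ} {δ : ℝ} (a b : ℂ) (hg : AEStronglyMeasurable g μ)
    (hs : AEStronglyMeasurable s μ) (hδ : 0 < δ)
    (hint : Integrable (fun t ↦ ‖g t‖ * exp (δ * ‖s t‖)) μ) :
    HasFPowerSeriesAt (fun z ↦ ∫ t, g t * kummerM a b (z * s t) ∂μ)
      (.ofScalars ℂ fun k ↦ kummerCoeff a b k * ∫ t, g t * s t ^ k ∂μ) 0 :=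
  have ⟨_, hA⟩ := exists_norm_kummerCoeff_le a b
  hasFPowerSeriesAt_integral_mul_tsum_mul_pow hg hs hA hδ hint

lemma ofReal_dcoef (q : ℝ) (k : ℕ) :
    (dcoef q k : ℂ) = kummerCoeff (-1 / 2) (-(q : ℂ) - 1 / 2) k * 2 ^ k := by
  have hpoch (x : ℝ) : (((ascPochhammer ℝ k).eval x : ℝ) : ℂ) = (ascPochhammer ℂ k).eval (x : ℂ) :=
    (Polynomial.eval₂_at_apply Complex.ofRealHom x).symm.trans
      (ascPochhammer_eval₂ Complex.ofRealHom k (x : ℂ)).symm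
  rw [dcoef, kummerCoeff]
  push_cast [hpoch]
  ring

end Kummer

section Estimates

lemma exp_abs_le_two_mul_cosh (x : ℝ) : exp |x| ≤ 2 * cosh x := by
  rw [← cosh_abs, cosh_eq]
  linarith [exp_pos (-|x|)]

lemma abs_sin_re_mul_exp_abs_im_le_two_mul_norm_sin (z : ℂ) :
    |sin z.re| * exp |z.im| ≤ 2 * ‖Complex.sin z‖ := by
  have hre : (Complex.sin z).re = sin z.re * cosh z.im := by
    rw [Complex.sin_eq]
    simp [Complex.sin_ofReal_re, Complex.cosh_ofReal_re]
  calc |sin z.re| * exp |z.im| ≤ |sin z.re| * (2 * cosh z.im) := by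
        gcongr
        exact exp_abs_le_two_mul_cosh _
    _ = 2 * |(Complex.sin z).re| := by
        rw [hre, abs_mul, abs_of_pos (cosh_pos _), mul_left_comm]
    _ ≤ 2 * ‖Complex.sin z‖ := by
        gcongr
        exact Complex.abs_re_le_norm _

lemma exists_rpow_le_mul_exp {m : ℝ} (hm : 0 < m) (r : ℝ) :
    ∃ C > 0, ∀ x, m ≤ x → x ^ r ≤ C * exp x := by
  refine ⟨m ^ r / m ^ ⌈r⌉₊ * ⌈r⌉₊.factorial, by positivity, fun x hx ↦ ?_⟩
  have hx0 : 0 < x := hm.trans_le hx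
  have hone : 1 ≤ x / m := (one_le_div hm).2 hx
  calc x ^ r = m ^ r * (x / m) ^ r := by
        rw [← mul_rpow hm.le (by positivity), mul_div_cancel₀ x hm.ne']
    _ ≤ m ^ r * (x / m) ^ ⌈r⌉₊ := by
        rw [← rpow_natCast (x / m)]
        gcongr
        exact Nat.le_ceil r
    _ = m ^ r / m ^ ⌈r⌉₊ * x ^ ⌈r⌉₊ := by rw [div_pow]; ring
    _ ≤ m ^ r / m ^ ⌈r⌉₊ * (⌈r⌉₊.factorial * exp x) := by
        gcongr
        exact (div_le_iff₀' (by positivity)).1 (pow_div_factorial_le_exp x hx0.le _)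
    _ = m ^ r / m ^ ⌈r⌉₊ * ⌈r⌉₊.factorial * exp x := by ring

lemma integrable_exp_neg_mul_abs {a : ℝ} (ha : 0 < a) : Integrable fun t : ℝ ↦ exp (-a * |t|) := by
  have h := integrable_fun_norm_addHaar (volume : Measure ℝ) (f := fun r ↦ exp (-a * r))
  simpa using h.2 (by simpa using integrableOn_exp_mul_Ioi (neg_lt_zero.2 ha) 0)

end Estimates

section Contour

/-- The point `c + i t` of the vertical contour `Re s = c`. -/
noncomputable def verticalLine (c t : ℝ) : ℂ := c + t * Complex.I

/-- The weight `exp (η s) s ^ (-q - 3/2) / (2 sin (π s))` at `s = c + i t`, shared by the integrands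
of `F_q^{(2)}` and `Φ_k^{(2)}`; their constant prefactors are absorbed into it. -/
noncomputable def contourWeight (q c η t : ℝ) : ℂ :=
  Complex.exp (η * verticalLine c t) * verticalLine c t ^ (-(q : ℂ) - 3 / 2) /
    (2 * Complex.sin (π * verticalLine c t))

/-- `F_q^{(2)}(η, β)` as a function of the complex variable `z = 1 / β`. -/
noncomputable def F2Recip (q c η : ℝ) (z : ℂ) : ℂ :=
  ∫ t : ℝ, contourWeight q c η t *
    kummerM (-1 / 2) (-(q : ℂ) - 1 / 2) (z * (2 * verticalLine c t))

variable {c : ℝ}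

lemma verticalLine_re (c t : ℝ) : (verticalLine c t).re = c := by simp [verticalLine]

lemma verticalLine_im (c t : ℝ) : (verticalLine c t).im = t := by simp [verticalLine]

lemma verticalLine_ne_zero (hc : c ≠ 0) (t : ℝ) : verticalLine c t ≠ 0 :=
  fun h ↦ hc <| by simpa [verticalLine_re] using congrArg Complex.re h

@[fun_prop]
lemma continuous_verticalLine (c : ℝ) : Continuous (verticalLine c) := by
  unfold verticalLine
  fun_prop

@[fun_prop]
lemma measurable_contourWeight (q c η : ℝ) : Measurable (contourWeight q c η) := by
  unfold contourWeight
  fun_prop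

lemma F2_eq_F2Recip (hc : c ≠ 0) (q η β : ℝ) : F2 q c η β = F2Recip q c η (β : ℂ)⁻¹ := by
  rw [F2, F2Recip, ← integral_const_mul]
  congr 1 with t
  rw [contourWeight, show (c : ℂ) + t * Complex.I = verticalLine c t from rfl]
  have hpow : verticalLine c t ^ (-(q : ℂ) - 3 / 2) =
      verticalLine c t / verticalLine c t ^ ((q : ℂ) + 5 / 2) := by
    rw [show -(q : ℂ) - 3 / 2 = 1 - (q + 5 / 2) by ring,
      Complex.cpow_sub _ _ (verticalLine_ne_zero hc t), Complex.cpow_one]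
  have harg : 2 * verticalLine c t / (β : ℂ) = (β : ℂ)⁻¹ * (2 * verticalLine c t) := by ring
  have hpi : (π : ℂ) ≠ 0 := Complex.ofReal_ne_zero.2 pi_ne_zero
  rw [hpow, harg]
  field_simp

lemma Phi2_eq_integral_contourWeight (hc : c ≠ 0) (q η : ℝ) (k : ℕ) :
    Phi2 c k η q = ∫ t : ℝ, contourWeight q c η t * verticalLine c t ^ k := by
  rw [Phi2, ← integral_const_mul]
  congr 1 with t
  rw [contourWeight, show (c : ℂ) + t * Complex.I = verticalLine c t from rfl,
    show (k : ℂ) - q - 3 / 2 = (-q - 3 / 2) + k by ring,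
    Complex.cpow_add _ _ (verticalLine_ne_zero hc t), Complex.cpow_natCast]
  ring

lemma norm_verticalLine_le (c t : ℝ) : ‖verticalLine c t‖ ≤ |c| + |t| := by
  simpa only [verticalLine_re, verticalLine_im] using
    Complex.norm_le_abs_re_add_abs_im (verticalLine c t)

lemma abs_le_norm_verticalLine (c t : ℝ) : |c| ≤ ‖verticalLine c t‖ := by
  simpa only [verticalLine_re] using Complex.abs_re_le_norm (verticalLine c t)

lemma sin_pi_mul_ne_zero_of_ne_intCast (hc : ∀ n : ℤ, c ≠ n) : sin (π * c) ≠ 0 := by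
  rw [sin_ne_zero_iff]
  intro n hn
  exact hc n (mul_left_cancel₀ pi_ne_zero (by rw [← hn, mul_comm]))

lemma exists_norm_contourWeight_mul_exp_le (q η : ℝ) (hc : ∀ n : ℤ, c ≠ n) :
    ∃ C, ∀ t, ‖contourWeight q c η t‖ * exp ‖verticalLine c t‖ ≤ C * exp (-(π - 2) * |t|) := by
  have hsin : 0 < |sin (π * c)| := abs_pos.2 (sin_pi_mul_ne_zero_of_ne_intCast hc)
  obtain ⟨C, hC0, hC⟩ := exists_rpow_le_mul_exp (abs_pos.2 (by simpa using hc 0)) (-q - 3 / 2)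
  refine ⟨exp (η * c) * C * exp (2 * |c|) / |sin (π * c)|, fun t ↦ ?_⟩
  set s := verticalLine c t
  have hexp : ‖Complex.exp (η * s)‖ = exp (η * c) := by
    rw [Complex.norm_exp, Complex.re_ofReal_mul, verticalLine_re]
  have hpow : ‖s ^ (-(q : ℂ) - 3 / 2)‖ ≤ C * exp ‖s‖ := by
    rw [show -(q : ℂ) - 3 / 2 = ((-q - 3 / 2 : ℝ) : ℂ) by push_cast; rfl, Complex.norm_cpow_real]
    exact hC _ (abs_le_norm_verticalLine c t)
  have hsin_s : |sin (π * c)| * exp (π * |t|) ≤ ‖2 * Complex.sin (π * s)‖ := by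
    simpa [s, verticalLine_re, verticalLine_im, abs_mul, abs_of_pos pi_pos] using
      abs_sin_re_mul_exp_abs_im_le_two_mul_norm_sin (π * s)
  calc ‖contourWeight q c η t‖ * exp ‖s‖
      ≤ exp (η * c) * (C * exp ‖s‖) / (|sin (π * c)| * exp (π * |t|)) * exp ‖s‖ := by
        rw [contourWeight, norm_div, norm_mul, hexp]
        gcongr
    _ = exp (η * c) * C / |sin (π * c)| * exp (2 * ‖s‖ - π * |t|) := by
        rw [exp_sub, two_mul, exp_add]
        field_simp
    _ ≤ exp (η * c) * C / |sin (π * c)| * exp (2 * |c| + -(π - 2) * |t|) := by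
        gcongr
        linarith [norm_verticalLine_le c t]
    _ = exp (η * c) * C * exp (2 * |c|) / |sin (π * c)| * exp (-(π - 2) * |t|) := by
        rw [exp_add]
        ring

lemma integrable_norm_contourWeight_mul_exp (q η : ℝ) (hc : ∀ n : ℤ, c ≠ n) :
    Integrable fun t ↦ ‖contourWeight q c η t‖ * exp ‖verticalLine c t‖ := by
  obtain ⟨C, hC⟩ := exists_norm_contourWeight_mul_exp_le q η hc
  have hpi : 0 < π - 2 := by linarith [pi_gt_three]
  refine ((integrable_exp_neg_mul_abs hpi).const_mul C).mono' (by fun_prop)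
    (.of_forall fun t ↦ ?_)
  simpa using hC t

theorem hasFPowerSeriesAt_F2Recip (q η : ℝ) (hc : ∀ n : ℤ, c ≠ n) :
    HasFPowerSeriesAt (F2Recip q c η) (.ofScalars ℂ fun k ↦ dcoef q k * Phi2 c k η q) 0 := by
  have hint : Integrable fun t ↦
      ‖contourWeight q c η t‖ * exp (1 / 2 * ‖2 * verticalLine c t‖) := by
    simpa [← mul_assoc] using integrable_norm_contourWeight_mul_exp q η hc
  have hseries := hasFPowerSeriesAt_integral_mul_kummerM (s := fun t ↦ 2 * verticalLine c t)
    (-1 / 2) (-(q : ℂ) - 1 / 2) (by fun_prop) (by fun_prop) one_half_pos hint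
  convert! hseries using 3 with k
  rw [ofReal_dcoef, Phi2_eq_integral_contourWeight (by simpa using hc 0), mul_assoc,
    ← integral_const_mul]
  congr 2 with t
  ring

end Contour

lemma add_one_half_ne_natCast {q : ℝ} (hq : 0 ≤ q) (hhalf : ∀ k : ℕ, q ≠ (k : ℝ) + 1 / 2) :
    ∀ k : ℕ, q + 1 / 2 ≠ k
  | 0, h => by norm_num at h; linarith
  | k + 1, h => hhalf k (by push_cast at h; linarith)

lemma ne_intCast_of_mem_Ioo {c : ℝ} (hc : c ∈ Set.Ioo 0 1) (n : ℤ) : c ≠ n := by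
  rintro rfl
  obtain ⟨h0, h1⟩ := hc
  norm_cast at h0 h1
  lia

theorem stmt12_general (q c η : ℝ) (_hq : ∀ k : ℕ, q + 1 / 2 ≠ k) (hc : ∀ n : ℤ, c ≠ n) (N : ℕ) :
    (fun β : ℝ => F2 q c η β -
        ∑ k ∈ Finset.range N, ((dcoef q k : ℝ) : ℂ) * (β : ℂ) ^ (-(k : ℤ)) *
          Phi2 c k η q) =O[atTop]
      (fun β : ℝ => β ^ (-(N : ℝ))) := by
  have hinv : Tendsto (fun β : ℝ ↦ (β : ℂ)⁻¹) atTop (𝓝 0) :=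
    tendsto_inv₀_cobounded.comp (RCLike.tendsto_ofReal_atTop_cobounded ℂ)
  have htaylor := (hasFPowerSeriesAt_F2Recip q η hc).isBigO_sub_partialSum_pow N
  refine (htaylor.comp_tendsto hinv).congr' (.of_forall fun β ↦ ?_) ?_
  · rw [Function.comp_apply, zero_add, ← F2_eq_F2Recip (by simpa using hc 0)]
    simp only [FormalMultilinearSeries.partialSum, FormalMultilinearSeries.ofScalars_apply_eq,
      smul_eq_mul, inv_pow, zpow_neg, zpow_natCast, mul_right_comm]
  · filter_upwards [eventually_ge_atTop 0] with β hβ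
    simp [rpow_neg hβ, abs_of_nonneg hβ]

theorem stmt12 (q c η : ℝ) (hq : 0 ≤ q) (hhalf : ∀ k : ℕ, q ≠ (k : ℝ) + 1 / 2)
    (hc0 : 0 < c) (hc1 : c < 1) :
    ∀ N : ℕ, 1 ≤ N →
      (fun β : ℝ => F2 q c η β -
          ∑ k ∈ Finset.range N, ((dcoef q k : ℝ) : ℂ) * (β : ℂ) ^ (-(k : ℤ)) *
            Phi2 c k η q) =O[atTop]
        (fun β : ℝ => β ^ (-(N : ℝ))) :=
  fun N _ ↦ stmt12_general q c η (add_one_half_ne_natCast hq hhalf)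
    (ne_intCast_of_mem_Ioo ⟨hc0, hc1⟩) N
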